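/- Let K : ℝ → ℝ be continuous, let c be a nontrivial scalar Jacobi field for K with c(t₁) = c(t₂) = 0 where t₁ < t₂, and let m be the (finite) number of zeros of c in the open interval (t₁, t₂). Then (−1)^m · c'(t₁) · c'(t₂) < 0. In other words, c'(t₁) and c'(t₂) have opposite signs exactly when m is even, and equal signs when m is odd. -/

import Mathlib

/-- A scalar Jacobi field for the curvature function `K` is a `C²` function `c : ℝ → ℝ`
satisfying `c'' + K c = 0`. -/
def IsJacobiField (K : ℝ → ℝ) (c : ℝ → ℝ) : Prop :=
  ContDiff ℝ 2 c ∧ ∀ t : ℝ, deriv (deriv c) t + K t * c t = 0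

/-!
By uniqueness for the initial value problem, every zero of a nontrivial Jacobi field is simple.
A function with simple zeros leaves a zero with the sign of its derivative and arrives at the next
one with the opposite sign. As its sign is constant in between, the sign of the derivative flips
from each zero to the next, hence `m + 1` times from `t₁` to `t₂`.
-/

open Set Filter Topology

section Uniqueness

variable {E : Type*} [NormedAddCommGroup E] [NormedSpace ℝ E] {C a b : ℝ}

theorem eq_zero_of_norm_deriv_le_mul_norm {f f' : ℝ → E}
    (hf : ∀ t ∈ uIcc a b, HasDerivAt f (f' t) t)
    (bound : ∀ t ∈ uIcc a b, ‖f' t‖ ≤ C * ‖f t‖) (ha : f a = 0) : f b = 0 := by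
  have forward {g g' : ℝ → E} {u v : ℝ} (huv : u ≤ v)
      (hg : ∀ t ∈ Icc u v, HasDerivAt g (g' t) t)
      (bound : ∀ t ∈ Icc u v, ‖g' t‖ ≤ C * ‖g t‖) (hu : g u = 0) : g v = 0 :=
    eq_zero_of_abs_deriv_le_mul_abs_self_of_eq_zero_right
      (fun t ht ↦ (hg t ht).continuousAt.continuousWithinAt)
      (fun t ht ↦ (hg t (Ico_subset_Icc_self ht)).hasDerivWithinAt) hu
      (fun t ht ↦ bound t (Ico_subset_Icc_self ht)) v (right_mem_Icc.mpr huv)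
  rcases le_total a b with hab | hba
  · rw [uIcc_of_le hab] at hf bound
    exact forward hab hf bound ha
  · rw [uIcc_of_ge hba] at hf bound
    have neg_mem {t : ℝ} (ht : t ∈ Icc (-a) (-b)) : -t ∈ Icc b a :=
      ⟨le_neg_of_le_neg ht.2, neg_le_of_neg_le ht.1⟩
    simpa only [neg_neg] using forward (g := fun t ↦ f (-t)) (g' := fun t ↦ -f' (-t))
      (neg_le_neg hba)
      (fun t ht ↦ by
        simpa only [neg_one_smul] using! (hf (-t) (neg_mem ht)).scomp t (hasDerivAt_neg t))
      (fun t ht ↦ by simpa only [norm_neg] using bound (-t) (neg_mem ht)) (by rwa [neg_neg])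

theorem eq_zero_of_norm_deriv_deriv_le_mul_norm {c c' c'' : ℝ → E}
    (hc : ∀ t ∈ uIcc a b, HasDerivAt c (c' t) t)
    (hc' : ∀ t ∈ uIcc a b, HasDerivAt c' (c'' t) t)
    (bound : ∀ t ∈ uIcc a b, ‖c'' t‖ ≤ C * ‖c t‖) (ha : c a = 0) (ha' : c' a = 0) : c b = 0 := by
  have bound_pair : ∀ t ∈ uIcc a b, ‖(c' t, c'' t)‖ ≤ max 1 C * ‖(c t, c' t)‖ := by
    intro t ht
    refine max_le ?_ ?_
    · calc ‖c' t‖ = 1 * ‖c' t‖ := (one_mul _).symm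
        _ ≤ max 1 C * ‖(c t, c' t)‖ := by
          gcongr
          exacts [le_max_left 1 C, norm_snd_le (c t, c' t)]
    · calc ‖c'' t‖ ≤ C * ‖c t‖ := bound t ht
        _ ≤ max 1 C * ‖(c t, c' t)‖ := by
          gcongr
          exacts [le_max_right 1 C, norm_fst_le (c t, c' t)]
  have pair_eq_zero : (c b, c' b) = 0 :=
    eq_zero_of_norm_deriv_le_mul_norm (f := fun t ↦ (c t, c' t))
      (fun t ht ↦ (hc t ht).prodMk (hc' t ht)) bound_pair (Prod.ext ha ha')
  exact congrArg Prod.fst pair_eq_zero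

end Uniqueness

theorem finite_zeros_of_isCompact_of_deriv_ne_zero {𝕜 F : Type*} [NontriviallyNormedField 𝕜]
    [NormedAddCommGroup F] [NormedSpace 𝕜 F] {f : 𝕜 → F} {s : Set 𝕜} (hs : IsCompact s)
    (hf : ContinuousOn f s) (simple : ∀ x ∈ s, f x = 0 → deriv f x ≠ 0) :
    {x ∈ s | f x = 0}.Finite := by
  have isCompact_zeros : IsCompact {x ∈ s | f x = 0} :=
    hs.of_isClosed_subset (hf.preimage_isClosed_of_isClosed hs.isClosed isClosed_singleton)
      inter_subset_left
  by_contra infinite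
  obtain ⟨z, hz, accPt⟩ := Set.Infinite.exists_accPt_of_subset_isCompact infinite
    isCompact_zeros Subset.rfl
  have isolated : ∀ᶠ x in 𝓝[≠] z, f x ≠ 0 :=
    (differentiableAt_of_deriv_ne_zero (simple z hz.1 hz.2)).hasDerivAt.eventually_ne
      (simple z hz.1 hz.2)
  exact accPt_iff_frequently_nhdsNE.mp accPt (isolated.mono fun x hx hmem ↦ hx hmem.2)

theorem ncard_sep_Ioo_eq_add_add_one {α : Type*} [LinearOrder α] {p : α → Prop} {a b s : α}
    (hs : s ∈ Ioo a b) (hps : p s) (hfin : {t ∈ Ioo a b | p t}.Finite) :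
    {t ∈ Ioo a b | p t}.ncard =
      {t ∈ Ioo a s | p t}.ncard + {t ∈ Ioo s b | p t}.ncard + 1 := by
  have split : {t ∈ Ioo a b | p t} = insert s ({t ∈ Ioo a s | p t} ∪ {t ∈ Ioo s b | p t}) := by
    ext t
    simp only [mem_ofPred_eq, mem_insert_iff, mem_union, mem_Ioo] at hs ⊢
    grind
  have disjoint : Disjoint {t ∈ Ioo a s | p t} {t ∈ Ioo s b | p t} :=
    disjoint_left.mpr fun t hl hr ↦ lt_asymm hl.1.2 hr.1.1
  have notMem : s ∉ {t ∈ Ioo a s | p t} ∪ {t ∈ Ioo s b | p t} := by simp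
  rw [split] at hfin ⊢
  have hfin' := hfin.subset (subset_insert _ _)
  rw [ncard_insert_of_notMem notMem hfin', ncard_union_eq disjoint
    (hfin'.subset subset_union_left) (hfin'.subset subset_union_right)]

theorem sign_eq_sign_of_isPreconnected {X R : Type*} [TopologicalSpace X] [Zero R] [LinearOrder R]
    [TopologicalSpace R] [OrderTopology R] {g : X → R} {s : Set X}
    (hs : IsPreconnected s) (hg : ContinuousOn g s) (ne_zero : ∀ x ∈ s, g x ≠ 0) {x y : X}
    (hx : x ∈ s) (hy : y ∈ s) : SignType.sign (g x) = SignType.sign (g y) :=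
  hs.constant (fun z hz ↦ (continuousAt_sign_of_ne_zero (ne_zero z hz)).comp_continuousWithinAt
    (hg z hz)) hx hy

section SimpleZeros

variable {f : ℝ → ℝ} {a b : ℝ}

theorem eventually_sign_eq_of_deriv_ne_zero {x₀ : ℝ} (hx₀ : f x₀ = 0) (hf : deriv f x₀ ≠ 0) :
    ∀ᶠ x in 𝓝 x₀, SignType.sign (f x) = SignType.sign (deriv f x₀) * SignType.sign (x - x₀) := by
  rcases hf.lt_or_gt with neg | pos
  · simpa only [sign_neg neg, neg_one_mul, ← Left.sign_neg, neg_sub] using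
      eventually_nhdsWithin_sign_eq_of_deriv_neg neg hx₀
  · simpa only [sign_pos pos, one_mul] using eventually_nhdsWithin_sign_eq_of_deriv_pos pos hx₀

theorem sign_deriv_eq_neg_of_consecutive_zeros (hab : a < b) (hf : ContinuousOn f (Ioo a b))
    (ha : f a = 0) (hb : f b = 0) (ha' : deriv f a ≠ 0) (hb' : deriv f b ≠ 0)
    (ne_zero : ∀ t ∈ Ioo a b, f t ≠ 0) :
    SignType.sign (deriv f b) = -SignType.sign (deriv f a) := by
  obtain ⟨x, hx, hx_mem⟩ : ∃ x, SignType.sign (f x) =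
      SignType.sign (deriv f a) * SignType.sign (x - a) ∧ x ∈ Ioo a b :=
    (((eventually_sign_eq_of_deriv_ne_zero ha ha').filter_mono nhdsWithin_le_nhds).and
      (Ioo_mem_nhdsGT hab)).exists
  obtain ⟨y, hy, hy_mem⟩ : ∃ y, SignType.sign (f y) =
      SignType.sign (deriv f b) * SignType.sign (y - b) ∧ y ∈ Ioo a b :=
    (((eventually_sign_eq_of_deriv_ne_zero hb hb').filter_mono nhdsWithin_le_nhds).and
      (Ioo_mem_nhdsLT hab)).exists
  rw [sign_pos (sub_pos.mpr hx_mem.1), mul_one] at hx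
  rw [sign_neg (sub_neg.mpr hy_mem.2), mul_neg_one] at hy
  rw [← hx, sign_eq_sign_of_isPreconnected isPreconnected_Ioo hf ne_zero hx_mem hy_mem, hy,
    neg_neg]

theorem sign_deriv_eq_neg_one_pow_mul (hab : a < b) (hf : ContinuousOn f (Icc a b))
    (ha : f a = 0) (hb : f b = 0) (simple : ∀ t ∈ Icc a b, f t = 0 → deriv f t ≠ 0) :
    SignType.sign (deriv f b) =
      (-1) ^ ({t ∈ Ioo a b | f t = 0}.ncard + 1) * SignType.sign (deriv f a) := by
  induction hm : {t ∈ Ioo a b | f t = 0}.ncard using Nat.strong_induction_on generalizing a b with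
  | _ m ih =>
  have finite_zeros : {t ∈ Ioo a b | f t = 0}.Finite :=
    (finite_zeros_of_isCompact_of_deriv_ne_zero isCompact_Icc hf simple).subset fun t ht ↦
      ⟨Ioo_subset_Icc_self ht.1, ht.2⟩
  rcases {t ∈ Ioo a b | f t = 0}.eq_empty_or_nonempty with no_zero | ⟨s, hs, hfs⟩
  · have ne_zero : ∀ t ∈ Ioo a b, f t ≠ 0 := fun t ht h ↦ no_zero.subset ⟨ht, h⟩
    rw [← hm, no_zero, ncard_empty, zero_add, pow_one, neg_one_mul]
    exact sign_deriv_eq_neg_of_consecutive_zeros hab (hf.mono Ioo_subset_Icc_self) ha hb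
      (simple a (left_mem_Icc.mpr hab.le) ha) (simple b (right_mem_Icc.mpr hab.le) hb) ne_zero
  · have hcard := ncard_sep_Ioo_eq_add_add_one hs hfs finite_zeros
    have left_subset : Icc a s ⊆ Icc a b := Icc_subset_Icc_right hs.2.le
    have right_subset : Icc s b ⊆ Icc a b := Icc_subset_Icc_left hs.1.le
    have sign_s := ih _ (by lia) hs.1 (hf.mono left_subset) ha hfs
      (fun t ht ↦ simple t (left_subset ht)) rfl
    have sign_b := ih _ (by lia) hs.2 (hf.mono right_subset) hfs hb
      (fun t ht ↦ simple t (right_subset ht)) rfl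
    rw [sign_b, sign_s, ← mul_assoc, ← pow_add, ← hm, hcard]
    congr 2
    lia

theorem neg_one_pow_mul_deriv_mul_deriv_neg (hab : a < b) (hf : ContinuousOn f (Icc a b))
    (ha : f a = 0) (hb : f b = 0) (simple : ∀ t ∈ Icc a b, f t = 0 → deriv f t ≠ 0) :
    (-1) ^ {t ∈ Ioo a b | f t = 0}.ncard * deriv f a * deriv f b < 0 := by
  have sign_a_mul_self : SignType.sign (deriv f a) * SignType.sign (deriv f a) = 1 := by
    rw [← sign_mul, sign_pos (mul_self_pos.mpr (simple a (left_mem_Icc.mpr hab.le) ha))]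
  have odd_pow (m : ℕ) : (-1 : SignType) ^ m * (-1) ^ (m + 1) = -1 := by
    rw [← pow_add, Odd.neg_one_pow ⟨m, by ring⟩]
  rw [← sign_eq_neg_one_iff, sign_mul, sign_mul, sign_pow, sign_neg neg_one_lt_zero,
    sign_deriv_eq_neg_one_pow_mul hab hf ha hb simple, mul_mul_mul_comm, sign_a_mul_self, mul_one,
    odd_pow]

end SimpleZeros

theorem IsJacobiField.differentiable {K c : ℝ → ℝ} (hc : IsJacobiField K c) :
    Differentiable ℝ c :=
  hc.1.differentiable two_ne_zero

theorem IsJacobiField.hasDerivAt_deriv {K c : ℝ → ℝ} (hc : IsJacobiField K c) (t : ℝ) :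
    HasDerivAt (deriv c) (-(K t * c t)) t := by
  rw [← eq_neg_of_add_eq_zero_left (hc.2 t)]
  exact (hc.1.differentiable_deriv_two t).hasDerivAt

theorem sign_of_derivatives_at_conjugate_points_general {K c : ℝ → ℝ}
    (hK : ∀ s, IsCompact s → BddAbove ((fun t ↦ |K t|) '' s)) (hc : Differentiable ℝ c)
    (hc' : ∀ t, HasDerivAt (deriv c) (-(K t * c t)) t) (hne : ∃ t, c t ≠ 0)
    {t₁ t₂ : ℝ} (h12 : t₁ < t₂) (h1 : c t₁ = 0) (h2 : c t₂ = 0) :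
    (-1) ^ {t ∈ Ioo t₁ t₂ | c t = 0}.ncard * deriv c t₁ * deriv c t₂ < 0 := by
  obtain ⟨t₀, ht₀⟩ := hne
  have simple (t : ℝ) (ht : c t = 0) : deriv c t ≠ 0 := by
    intro ht'
    obtain ⟨C, hC⟩ := hK (uIcc t t₀) isCompact_uIcc
    refine ht₀ (eq_zero_of_norm_deriv_deriv_le_mul_norm (C := C)
      (fun s _ ↦ (hc s).hasDerivAt) (fun s _ ↦ hc' s) (fun s hs ↦ ?_) ht ht')
    rw [norm_neg, norm_mul]
    gcongr
    exact hC (mem_image_of_mem _ hs)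
  exact neg_one_pow_mul_deriv_mul_deriv_neg h12 hc.continuous.continuousOn h1 h2
    fun t _ ↦ simple t

/-- If a nontrivial scalar Jacobi field `c` vanishes at `t₁ < t₂` and has `m` zeros in
the open interval `(t₁, t₂)`, then `(−1)^m c'(t₁) c'(t₂) < 0`: the derivatives at the
endpoints have opposite signs exactly when `m` is even, and equal signs when `m` is odd. -/
theorem sign_of_derivatives_at_conjugate_points (K c : ℝ → ℝ) (hK : Continuous K)
    (hc : IsJacobiField K c) (hne : ¬ ∀ t : ℝ, c t = 0)
    (t₁ t₂ : ℝ) (h12 : t₁ < t₂) (h1 : c t₁ = 0) (h2 : c t₂ = 0)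
    (m : ℕ) (hm : m = {t ∈ Set.Ioo t₁ t₂ | c t = 0}.ncard) :
    (-1 : ℝ) ^ m * deriv c t₁ * deriv c t₂ < 0 :=
  hm ▸ sign_of_derivatives_at_conjugate_points_general
    (fun _ hs ↦ hs.bddAbove_image hK.abs.continuousOn) hc.differentiable hc.hasDerivAt_deriv
    (not_forall.mp hne) h12 h1 h2
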